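/- arXiv:2510.18617 — 2 statements merged into one kernel-verified Lean document; each statement's English description precedes it below -/
import Mathlib

section
/- Let h : ℝ^m → ℝ be convex, let A : ℝⁿ → ℝ^m be a continuous linear map with operator norm ‖A‖ ≤ σ_A, let ρ > 0, λ ∈ ℝ^m and x, x' ∈ ℝⁿ. Suppose y ∈ ℝ^m is a minimizer over ℝ^m of z ↦ h(z) − ⟨λ, Ax − z⟩ + (ρ/2)‖Ax − z‖², and define λ̄ := λ − ρ(Ax' − y). Then there exists a subgradient g of h at y (i.e., h(w) ≥ h(y) + ⟨g, w − y⟩ for all w ∈ ℝ^m) such that ‖g − (−λ̄)‖ ≤ ρ·σ_A·‖x' − x‖. In particular, the distance from −λ̄ to the subdifferential ∂h(y) is at most ρσ_A‖x' − x‖. -/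
open scoped RealInnerProductSpace

/-! If `h` is convex, `φ` is differentiable at `y`, and `y` minimizes `h + φ`, then
`-φ'(y) ∈ ∂h(y)`. For the augmented Lagrangian, `φ` is the multiplier term plus the quadratic
penalty and `-φ'(y) = ρ(Ax - y) - λ`, which differs from `-λ̄ = ρ(Ax' - y) - λ` by
`ρA(x - x')` only. -/

section FermatRule

variable {E : Type*} {h φ : E → ℝ} {s : Set E} {y : E}

/-- The linear functional `p` is a subgradient at `y` of the restriction of `h` to `s`, that is, of
the extended-valued function equal to `h` on `s` and to `+∞` elsewhere. Subgradients are taken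
in the dual space; a vector `g` of an inner product space stands for `innerSL ℝ g`. -/
def HasSubgradientWithinAt [AddCommGroup E] [Module ℝ E] [TopologicalSpace E]
    (h : E → ℝ) (p : StrongDual ℝ E) (s : Set E) (y : E) : Prop :=
  ∀ w ∈ s, h y + p (w - y) ≤ h w

lemma isLocalMinOn_epigraph_of_add [TopologicalSpace E]
    (hmin : IsLocalMinOn (fun z ↦ h z + φ z) s y) (hy : y ∈ s) :
    IsLocalMinOn (fun q : E × ℝ ↦ q.2 + φ q.1) {q | q.1 ∈ s ∧ h q.1 ≤ q.2} (y, h y) := by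
  have hmin_fst : IsLocalMinOn ((fun z ↦ h z + φ z) ∘ Prod.fst)
      {q : E × ℝ | q.1 ∈ s ∧ h q.1 ≤ q.2} (y, h y) :=
    hmin.comp_continuousOn (fun _ hq ↦ hq.1) continuousOn_fst ⟨hy, le_rfl⟩
  filter_upwards [hmin_fst, self_mem_nhdsWithin] with q hq ⟨_, hhq⟩
  exact hq.trans (add_le_add hhq le_rfl)

/- Passing to the epigraph replaces `h + φ` by `(z, t) ↦ t + φ z`, which is differentiable even if
`h` is not, so the smooth first-order condition applies. -/
lemma hasSubgradientWithinAt_neg_of_isLocalMinOn_add [NormedAddCommGroup E] [NormedSpace ℝ E]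
    {φ' : StrongDual ℝ E} (hconv : ConvexOn ℝ s h) (hφ : HasFDerivAt φ φ' y)
    (hmin : IsLocalMinOn (fun z ↦ h z + φ z) s y) (hy : y ∈ s) :
    HasSubgradientWithinAt h (-φ') s y := by
  intro w hw
  have hderiv : HasFDerivAt (fun q : E × ℝ ↦ q.2 + φ q.1)
      (.snd ℝ E ℝ + φ' ∘L .fst ℝ E ℝ) (y, h y) :=
    hasFDerivAt_snd.add (hφ.comp (y, h y) hasFDerivAt_fst)
  have hdir : (w, h w) - (y, h y) ∈ posTangentConeAt {q : E × ℝ | q.1 ∈ s ∧ h q.1 ≤ q.2} (y, h y) :=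
    sub_mem_posTangentConeAt_of_segment_subset
      (hconv.convex_epigraph.segment_subset ⟨hy, le_rfl⟩ ⟨hw, le_rfl⟩)
  have hnonneg : 0 ≤ h w - h y + φ' (w - y) :=
    (isLocalMinOn_epigraph_of_add hmin hy).hasFDerivWithinAt_nonneg hderiv.hasFDerivWithinAt hdir
  rw [neg_apply]
  linarith

end FermatRule

section AugmentedLagrangian

variable {F : Type*} [NormedAddCommGroup F] [InnerProductSpace ℝ F]

/-- The augmented Lagrangian of the constraint `a = z`, as a function of `z`, with multiplier `l`
and penalty parameter `ρ`. Terms independent of `z` are left out, and `a` plays the role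
of `A x`. -/
noncomputable def augmentedLagrangian (h : F → ℝ) (l : F) (ρ : ℝ) (a z : F) : ℝ :=
  h z - ⟪l, a - z⟫ + (ρ / 2) * ‖a - z‖ ^ 2

lemma hasFDerivAt_neg_inner_add_norm_sq (l : F) (ρ : ℝ) (a y : F) :
    HasFDerivAt (fun z ↦ -⟪l, a - z⟫ + (ρ / 2) * ‖a - z‖ ^ 2)
      (innerSL ℝ (l - ρ • (a - y))) y := by
  have hres : HasFDerivAt (fun z : F ↦ a - z) (-.id ℝ F) y := (hasFDerivAt_id y).const_sub a
  have hlin := (innerSL ℝ l).hasFDerivAt.comp y hres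
  refine (hlin.neg.add (hres.norm_sq.const_mul (ρ / 2))).congr_fderiv ?_
  ext v
  simp only [ContinuousLinearMap.comp_neg, ContinuousLinearMap.comp_id, neg_neg, map_sub, neg_sub,
    map_smul, add_apply, sub_apply, smul_apply, coe_innerSL_apply, nsmul_eq_mul, Nat.cast_ofNat,
    smul_eq_mul]
  ring

lemma hasSubgradientWithinAt_of_isLocalMinOn_augmentedLagrangian {h : F → ℝ} {s : Set F}
    {l a y : F} {ρ : ℝ} (hconv : ConvexOn ℝ s h)
    (hmin : IsLocalMinOn (augmentedLagrangian h l ρ a) s y) (hy : y ∈ s) :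
    HasSubgradientWithinAt h (innerSL ℝ (ρ • (a - y) - l)) s y := by
  have hsplit : augmentedLagrangian h l ρ a =
      fun z ↦ h z + (-⟪l, a - z⟫ + (ρ / 2) * ‖a - z‖ ^ 2) := by
    funext z
    rw [augmentedLagrangian]
    ring
  rw [← neg_sub, map_neg]
  exact hasSubgradientWithinAt_neg_of_isLocalMinOn_add hconv
    (hasFDerivAt_neg_inner_add_norm_sq l ρ a y) (hsplit ▸ hmin) hy

theorem stmt_2_general {E : Type*} [SeminormedAddCommGroup E] [NormedSpace ℝ E]
    {h : F → ℝ} {s : Set F} (hconv : ConvexOn ℝ s h) (A : E →L[ℝ] F) {σA : ℝ} (hA : ‖A‖ ≤ σA)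
    {ρ : ℝ} {lam y : F} {x : E} (x' : E) (hy : y ∈ s)
    (hmin : IsLocalMinOn (augmentedLagrangian h lam ρ (A x)) s y) :
    ∃ g : F, HasSubgradientWithinAt h (innerSL ℝ g) s y ∧
      ‖g - (-(lam - ρ • (A x' - y)))‖ ≤ |ρ| * σA * ‖x' - x‖ := by
  refine ⟨ρ • (A x - y) - lam,
    hasSubgradientWithinAt_of_isLocalMinOn_augmentedLagrangian hconv hmin hy, ?_⟩
  have hdiff : ρ • (A x - y) - lam - (-(lam - ρ • (A x' - y))) = -(ρ • A (x' - x)) := by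
    rw [map_sub]
    module
  calc ‖ρ • (A x - y) - lam - (-(lam - ρ • (A x' - y)))‖
      = |ρ| * ‖A (x' - x)‖ := by rw [hdiff, norm_neg, norm_smul, Real.norm_eq_abs]
    _ ≤ |ρ| * (σA * ‖x' - x‖) := by gcongr; exact A.le_of_opNorm_le hA _
    _ = |ρ| * σA * ‖x' - x‖ := (mul_assoc ..).symm

end AugmentedLagrangian

/-- If `y` minimizes the augmented Lagrangian in `y`, then `-λ̄`, with
`λ̄ = λ - ρ(Ax' - y)`, is within distance `ρ σ_A ‖x' - x‖` of the subdifferential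
`∂h(y)`. -/
theorem stmt_2 (n m : ℕ) (h : EuclideanSpace ℝ (Fin m) → ℝ)
    (hconv : ConvexOn ℝ Set.univ h)
    (A : EuclideanSpace ℝ (Fin n) →L[ℝ] EuclideanSpace ℝ (Fin m))
    (σA : ℝ) (hA : ‖A‖ ≤ σA) (ρ : ℝ) (hρ : 0 < ρ)
    (lam : EuclideanSpace ℝ (Fin m)) (x x' : EuclideanSpace ℝ (Fin n))
    (y : EuclideanSpace ℝ (Fin m))
    (hmin : ∀ z, h y - ⟪lam, A x - y⟫ + (ρ / 2) * ‖A x - y‖ ^ 2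
        ≤ h z - ⟪lam, A x - z⟫ + (ρ / 2) * ‖A x - z‖ ^ 2) :
    ∃ g : EuclideanSpace ℝ (Fin m),
      (∀ w, h y + ⟪g, w - y⟫ ≤ h w) ∧
      ‖g - (-(lam - ρ • (A x' - y)))‖ ≤ ρ * σA * ‖x' - x‖ := by
  simpa [HasSubgradientWithinAt, abs_of_pos hρ] using
    stmt_2_general hconv A hA x' (Set.mem_univ y) (isMinOn_univ_iff.2 hmin).localize
end

section
/- Let (r_k)_{k≥0} be a sequence in ℝ^m, (γ_k)_{k≥0} a sequence of nonnegative reals, and (λ_k)_{k≥0} a sequence in ℝ^m satisfying λ_0 = 0 and λ_k = λ_{k−1} − γ_k r_k for all k ≥ 1. Suppose that for every k ≥ 1, γ_k‖r_k‖ ≤ γ_0‖r_0‖(log 2)² / ((k+1)²·log(k+2)), where γ_0 ≥ 0 and log denotes the natural logarithm. Then for every k ≥ 0, ‖λ_k‖ ≤ (π²/6)·γ_0‖r_0‖. -/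
/-! The factor `(log 2)² / log (k + 2)` is at most one, so the `k`-th dual update moves the
multiplier by at most `γ₀ ‖r₀‖ / (k + 1)²`. The total displacement from `λ₀ = 0` is then bounded
by the Basel series `∑ 1 / k² = π² / 6`. -/

theorem dist_zero_le_of_dist_succ_le_of_hasSum {α : Type*} [PseudoMetricSpace α] {u : ℕ → α}
    {d : ℕ → ℝ} {S : ℝ} (hu : ∀ k, dist (u k) (u (k + 1)) ≤ d k) (hd : HasSum d S) (n : ℕ) :
    dist (u 0) (u n) ≤ S :=
  (dist_le_range_sum_of_dist_le n fun {k} _ => hu k).trans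
    (sum_le_hasSum _ (fun k _ => dist_nonneg.trans (hu k)) hd)

theorem hasSum_one_div_nat_add_one_sq :
    HasSum (fun k : ℕ => 1 / ((k : ℝ) + 1) ^ 2) (Real.pi ^ 2 / 6) := by
  simpa using (hasSum_nat_add_iff' 1).mpr hasSum_zeta_two

theorem log_two_sq_div_log_le_one {x : ℝ} (hx : 2 ≤ x) : Real.log 2 ^ 2 / Real.log x ≤ 1 := by
  have log_two_pos : 0 < Real.log 2 := Real.log_pos one_lt_two
  have log_two_le_one : Real.log 2 ≤ 1 := by linarith [Real.log_two_lt_d9]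
  have log_two_le : Real.log 2 ≤ Real.log x := Real.log_le_log two_pos hx
  refine div_le_one_of_le₀ ?_ (log_two_pos.le.trans log_two_le)
  exact (pow_le_of_le_one log_two_pos.le log_two_le_one two_ne_zero).trans log_two_le

theorem mul_log_two_sq_div_le {C x : ℝ} (hC : 0 ≤ C) (hx : 0 ≤ x) :
    C * Real.log 2 ^ 2 / ((x + 1) ^ 2 * Real.log (x + 2)) ≤ C * (1 / (x + 1) ^ 2) :=
  calc C * Real.log 2 ^ 2 / ((x + 1) ^ 2 * Real.log (x + 2))
      = C * (1 / (x + 1) ^ 2) * (Real.log 2 ^ 2 / Real.log (x + 2)) := by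
        rw [mul_one_div, div_mul_div_comm]
    _ ≤ C * (1 / (x + 1) ^ 2) :=
        mul_le_of_le_one_right (by positivity) (log_two_sq_div_log_le_one (by linarith))

theorem stmt_3_general {E : Type*} [SeminormedAddCommGroup E] [NormedSpace ℝ E] (r : ℕ → E)
    (γ : ℕ → ℝ) (lam : ℕ → E) (hγ : ∀ k, 0 ≤ γ k) (h0 : lam 0 = 0)
    (hrec : ∀ k, 1 ≤ k → lam k = lam (k - 1) - γ k • r k)
    (hbound : ∀ k : ℕ, 1 ≤ k →
      γ k * ‖r k‖ ≤ γ 0 * ‖r 0‖ * (Real.log 2) ^ 2 /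
        (((k : ℝ) + 1) ^ 2 * Real.log ((k : ℝ) + 2))) (k : ℕ) :
    ‖lam k‖ ≤ (Real.pi ^ 2 / 6) * (γ 0 * ‖r 0‖) := by
  have hC : 0 ≤ γ 0 * ‖r 0‖ := mul_nonneg (hγ 0) (norm_nonneg _)
  have update_le (n : ℕ) :
      dist (lam n) (lam (n + 1)) ≤ γ 0 * ‖r 0‖ * (1 / ((n : ℝ) + 1) ^ 2) :=
    calc dist (lam n) (lam (n + 1))
        = γ (n + 1) * ‖r (n + 1)‖ := by
          rw [hrec (n + 1) n.succ_pos, Nat.add_sub_cancel, dist_self_sub_right, norm_smul,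
            Real.norm_of_nonneg (hγ _)]
      _ ≤ γ 0 * ‖r 0‖ * (1 / (((n + 1 : ℕ) : ℝ) + 1) ^ 2) :=
          (hbound (n + 1) n.succ_pos).trans (mul_log_two_sq_div_le hC (Nat.cast_nonneg _))
      _ ≤ γ 0 * ‖r 0‖ * (1 / ((n : ℝ) + 1) ^ 2) := by
          gcongr
          exact n.le_succ
  have displacement_le := dist_zero_le_of_dist_succ_le_of_hasSum update_le
    (hasSum_one_div_nat_add_one_sq.mul_left _) k
  rwa [h0, dist_zero_left, mul_comm] at displacement_le

/-- Boundedness of the dual multipliers: if `λ_0 = 0`, `λ_k = λ_{k-1} - γ_k r_k`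
and `γ_k ‖r_k‖ ≤ γ_0 ‖r_0‖ (log 2)² / ((k+1)² log(k+2))` for all `k ≥ 1`,
then `‖λ_k‖ ≤ (π²/6) γ_0 ‖r_0‖` for all `k`. -/
theorem stmt_3 (m : ℕ) (r : ℕ → EuclideanSpace ℝ (Fin m)) (γ : ℕ → ℝ)
    (lam : ℕ → EuclideanSpace ℝ (Fin m))
    (hγ : ∀ k, 0 ≤ γ k) (hγ0 : 0 ≤ γ 0)
    (h0 : lam 0 = 0)
    (hrec : ∀ k, 1 ≤ k → lam k = lam (k - 1) - γ k • r k)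
    (hbound : ∀ k : ℕ, 1 ≤ k →
      γ k * ‖r k‖ ≤ γ 0 * ‖r 0‖ * (Real.log 2) ^ 2 /
        (((k : ℝ) + 1) ^ 2 * Real.log ((k : ℝ) + 2))) :
    ∀ k, ‖lam k‖ ≤ (Real.pi ^ 2 / 6) * (γ 0 * ‖r 0‖) :=
  stmt_3_general r γ lam hγ h0 hrec hbound
end
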